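/- Let (X, d) be a metric space and let 0 < α ≤ 1. Then d^α, defined by d^α(x,y) := (d(x,y))^α, is again a metric on X; moreover, if d is Euclidean then d^α is also Euclidean. -/

import Mathlib

/-!
The metric axioms for `d ^ α` follow from monotonicity and subadditivity of `r ↦ r ^ α`.

For the Euclidean part it suffices to embed an inner product space `H` carrying the distance
`‖x - y‖ ^ α`; the case `α = 1` is trivial. For `0 < α < 1` this is Schoenberg's argument: such an
embedding exists once the kernel `‖x‖ ^ (2α) + ‖y‖ ^ (2α) - ‖x - y‖ ^ (2α)` is positive
semidefinite (`posSemidef_rpow`), because positive semidefinite kernels are Gram matrices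
(`exists_featureMap`). Mathlib's formula `r ^ α = ∫ t ^ α (1 / t - 1 / (t + r)) dμ(t)`, applied to
`r = ‖x - y‖²`, reduces this to the kernels `1 / (t + ‖x - y‖²)`. These are mixtures of Gaussian
kernels `exp (-s ‖x - y‖²)` (`posSemidef_inv_add_sq`), and Gaussian kernels are positive
semidefinite by the Schur product theorem (`posSemidef_gaussian`).
-/

/-- A function `d : X → X → ℝ` is Euclidean if it is realized as the norm-distance of a map
into a real inner product space. -/
def IsEuclidean {X : Type*} (d : X → X → ℝ) : Prop :=
  ∃ (H : Type) (inst : NormedAddCommGroup H),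
    letI := inst
    ∃ (_ : InnerProductSpace ℝ H) (Φ : X → H),
      ∀ x y, ‖Φ x - Φ y‖ = d x y

open MeasureTheory
open scoped InnerProductSpace

/-- Moore's theorem for real kernels: a positive semidefinite kernel is the Gram matrix of a
feature map into an inner product space in the same universe. -/
theorem exists_featureMap {X : Type} {K : Matrix X X ℝ} (hK : K.PosSemidef) :
    ∃ (H : Type) (_ : NormedAddCommGroup H) (_ : InnerProductSpace ℝ H) (Φ : X → H),
      ∀ x y, ⟪Φ x, Φ y⟫_ℝ = K x y := by
  -- The RKHS construction takes operator-valued kernels; scalars act on `ℝ` by multiplication.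
  let K' : Matrix X X (ℝ →L[ℝ] ℝ) := .of fun x y => K x y • ContinuousLinearMap.id ℝ ℝ
  have hsymm : ∀ x y, K y x = K x y := fun x y => by simpa using hK.isHermitian.apply x y
  have hK' : K'.PosSemidef := by
    refine ((RKHS.posSemidef_tfae (K := K')).out 0 2 rfl rfl).mpr ⟨?_, fun v => ?_⟩
    · ext x y
      simp [K', Matrix.conjTranspose_apply, ← ContinuousLinearMap.one_def, hsymm]
    · have := hK.2 v
      simp only [star_trivial] at this
      refine this.trans_eq ?_
      simp [K', Finsupp.sum, hsymm]
      refine Finset.sum_congr rfl fun i _ => Finset.sum_congr rfl fun j _ => ?_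
      rw [hsymm]; ring
  have : Fact K'.PosSemidef := ⟨hK'⟩
  refine ⟨RKHS.OfKernel K', inferInstance, inferInstance,
    fun x => RKHS.kerFun (RKHS.OfKernel K') x (1 : ℝ), fun x y => ?_⟩
  rw [← RKHS.kernel_inner, RKHS.OfKernel.kernel_ofKernel]
  simp [K', hsymm]

theorem posSemidef_congr {X : Type*} {A B : Matrix X X ℝ} (hA : A.PosSemidef)
    (h : ∀ x y, A x y = B x y) : B.PosSemidef :=
  Matrix.ext h ▸ hA

theorem posSemidef_realGram {X H : Type*} [NormedAddCommGroup H] [InnerProductSpace ℝ H] (Φ : X → H) :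
    (Matrix.of fun x y => ⟪Φ x, Φ y⟫_ℝ).PosSemidef := by
  refine ⟨by ext x y; simp [real_inner_comm], fun c => ?_⟩
  have : 0 ≤ ⟪∑ i ∈ c.support, c i • Φ i, ∑ i ∈ c.support, c i • Φ i⟫_ℝ := real_inner_self_nonneg
  refine this.trans_eq ?_
  simp only [sum_inner, inner_sum, real_inner_smul_left, real_inner_smul_right, Finsupp.sum]
  refine Finset.sum_congr rfl fun i _ => Finset.sum_congr rfl fun j _ => ?_
  rw [real_inner_comm]
  simp; ring

theorem posSemidef_integral {X T : Type*} [MeasurableSpace T] {μ : Measure T}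
    {F : T → Matrix X X ℝ} (hint : ∀ x y, Integrable (fun t => F t x y) μ)
    (hF : ∀ᵐ t ∂μ, (F t).PosSemidef) :
    (Matrix.of fun x y => ∫ t, F t x y ∂μ).PosSemidef := by
  refine ⟨?_, fun c => ?_⟩
  · ext x y
    refine integral_congr_ae ?_
    filter_upwards [hF] with t ht
    simpa using ht.isHermitian.apply x y
  · have h : 0 ≤ ∫ t, ∑ i ∈ c.support, ∑ j ∈ c.support, star (c i) * F t i j * c j ∂μ := by
      refine integral_nonneg_of_ae ?_
      filter_upwards [hF] with t ht using ht.2 c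
    refine h.trans_eq ?_
    rw [integral_finsetSum _ fun i _ => integrable_finsetSum _ fun j _ =>
      ((hint i j).const_mul _).mul_const _]
    refine Finset.sum_congr rfl fun i _ => ?_
    rw [integral_finsetSum _ fun j _ => ((hint i j).const_mul _).mul_const _]
    refine Finset.sum_congr rfl fun j _ => ?_
    rw [integral_mul_const, integral_const_mul]
    rfl

/-- The entrywise exponential preserves positive semidefiniteness: its power series is a
nonnegative combination of Hadamard powers, which are covered by the Schur product theorem. -/
theorem posSemidef_hadamard_exp {X : Type*} {A : Matrix X X ℝ} (hA : A.PosSemidef) :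
    (Matrix.of fun x y => Real.exp (A x y)).PosSemidef := by
  have hpow : ∀ k : ℕ, (Matrix.of fun x y => A x y ^ k).PosSemidef := by
    intro k
    induction k with
    | zero => simpa using posSemidef_realGram (fun _ : X => (1 : ℝ))
    | succ k ih => exact ih.hadamard hA
  refine ⟨?_, fun c => ?_⟩
  · ext x y
    simpa using hA.isHermitian.apply x y
  · have h : HasSum (fun k : ℕ => ∑ i ∈ c.support, ∑ j ∈ c.support,
        star (c i) * (A i j ^ k / k.factorial) * c j)
        (∑ i ∈ c.support, ∑ j ∈ c.support, star (c i) * Real.exp (A i j) * c j) := by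
      refine hasSum_sum fun i _ => hasSum_sum fun j _ => ?_
      have := NormedSpace.expSeries_div_hasSum_exp (A i j)
      rw [← Real.exp_eq_exp_ℝ] at this
      exact (this.mul_left _).mul_right _
    refine h.nonneg fun k => ?_
    have := div_nonneg ((hpow k).2 c) (Nat.cast_nonneg (α := ℝ) k.factorial)
    refine this.trans_eq ?_
    simp only [Finsupp.sum, Finset.sum_div, Matrix.of_apply]
    refine Finset.sum_congr rfl fun i _ => Finset.sum_congr rfl fun j _ => ?_
    ring

/-- The Gaussian kernel is the rank-one kernel `exp (-s‖x‖²) * exp (-s‖y‖²)` times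
`exp (2 s ⟪x, y⟫)`. -/
theorem posSemidef_gaussian {H : Type*} [NormedAddCommGroup H] [InnerProductSpace ℝ H]
    {s : ℝ} (hs : 0 ≤ s) :
    (Matrix.of fun x y : H => Real.exp (-s * ‖x - y‖ ^ 2)).PosSemidef := by
  have h1 := posSemidef_hadamard_exp (posSemidef_realGram fun x : H => √(2 * s) • x)
  have h2 := posSemidef_realGram fun x : H => Real.exp (-s * ‖x‖ ^ 2)
  refine posSemidef_congr (h2.hadamard h1) fun x y => ?_
  have : √(2 * s) * √(2 * s) = 2 * s := Real.mul_self_sqrt (by positivity)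
  simp only [Matrix.of_apply, Matrix.hadamard_apply, real_inner_smul_left, real_inner_smul_right,
    ← mul_assoc, this, RCLike.inner_apply, conj_trivial, ← Real.exp_add]
  rw [norm_sub_sq_real]
  congr 1; ring

/-- This kernel is the Laplace transform `∫ exp (-s t) * exp (-s ‖x - y‖²) ds` over `s > 0`, hence
a mixture of Gaussian kernels. -/
theorem posSemidef_inv_add_sq {H : Type*} [NormedAddCommGroup H] [InnerProductSpace ℝ H]
    {t : ℝ} (ht : 0 < t) :
    (Matrix.of fun x y : H => (t + ‖x - y‖ ^ 2)⁻¹).PosSemidef := by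
  have hpos : ∀ x y : H, 0 < t + ‖x - y‖ ^ 2 := fun x y => by positivity
  have h := posSemidef_integral (X := H) (μ := volume.restrict (Set.Ioi (0 : ℝ)))
    (F := fun s => .of fun x y : H => Real.exp (-(t + ‖x - y‖ ^ 2) * s))
    (fun x y => integrableOn_exp_mul_Ioi (neg_lt_zero.2 (hpos x y)) 0) ?_
  · refine posSemidef_congr h fun x y => ?_
    simp only [Matrix.of_apply]
    rw [integral_exp_mul_Ioi (neg_lt_zero.2 (hpos x y))]
    simp [-neg_add_rev, neg_div_neg_eq]
  · filter_upwards [ae_restrict_mem measurableSet_Ioi] with s hs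
    refine posSemidef_congr
      ((posSemidef_gaussian (H := H) (le_of_lt hs)).smul (Real.exp_nonneg (-t * s))) fun x y => ?_
    simp only [Matrix.of_apply, Matrix.smul_apply, smul_eq_mul, ← Real.exp_add]
    congr 1; ring

/-- The kernel that polarizes the squared distance `‖x - y‖ ^ (2 * p)` about the origin, up to
the factor `1 / 2`. -/
theorem posSemidef_rpow {H : Type} [NormedAddCommGroup H] [InnerProductSpace ℝ H]
    {p : ℝ} (hp : p ∈ Set.Ioo (0 : ℝ) 1) :
    (Matrix.of fun x y : H =>
      (‖x‖ ^ 2) ^ p + (‖y‖ ^ 2) ^ p - (‖x - y‖ ^ 2) ^ p).PosSemidef := by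
  obtain ⟨μ, hμ⟩ := Real.exists_measure_rpow_eq_integral_rpowIntegrand₀₁ hp
  have hi := fun x : H => (hμ (‖x‖ ^ 2) (Set.mem_Ici.2 (sq_nonneg _))).1
  have h := posSemidef_integral (X := H) (μ := μ.restrict (Set.Ioi (0 : ℝ)))
    (F := fun t => .of fun x y : H => Real.rpowIntegrand₀₁ p t (‖x‖ ^ 2) +
      Real.rpowIntegrand₀₁ p t (‖y‖ ^ 2) - Real.rpowIntegrand₀₁ p t (‖x - y‖ ^ 2))
    (fun x y => ((hi x).add (hi y)).sub (hi (x - y))) ?_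
  · refine posSemidef_congr h fun x y => ?_
    simp only [Matrix.of_apply]
    rw [integral_sub (by exact (hi x).add (hi y)) (hi (x - y)), integral_add (hi x) (hi y)]
    simp only [fun x : H => (hμ (‖x‖ ^ 2) (Set.mem_Ici.2 (sq_nonneg _))).2]
  · filter_upwards [ae_restrict_mem measurableSet_Ioi] with t ht
    -- With `G x y = (t + ‖x - y‖²)⁻¹`, the integrand is `t ^ p` times
    -- `G x y - G x 0 - G 0 y + G 0 0`, the Gram matrix of a feature map of `G` based at `0`.
    obtain ⟨E, _, _, Φ, hΦ⟩ := exists_featureMap (posSemidef_inv_add_sq (H := H) ht)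
    refine posSemidef_congr ((posSemidef_realGram fun x => Φ x - Φ 0).smul
      (Real.rpow_nonneg (le_of_lt ht) p)) fun x y => ?_
    simp only [Matrix.of_apply, Matrix.smul_apply, smul_eq_mul, inner_sub_left, inner_sub_right,
      hΦ, Real.rpowIntegrand₀₁]
    simp
    ring

theorem exists_embedding_norm_rpow {H : Type} [NormedAddCommGroup H] [InnerProductSpace ℝ H]
    {p : ℝ} (h0 : 0 < p) (h1 : p ≤ 1) :
    ∃ (E : Type) (_ : NormedAddCommGroup E) (_ : InnerProductSpace ℝ E) (Φ : H → E),
      ∀ x y, ‖Φ x - Φ y‖ = ‖x - y‖ ^ p := by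
  rcases h1.eq_or_lt with rfl | h1
  · exact ⟨H, inferInstance, inferInstance, id, by simp⟩
  obtain ⟨E, i1, i2, Φ, hΦ⟩ := exists_featureMap (posSemidef_rpow (H := H) ⟨h0, h1⟩)
  refine ⟨E, i1, i2, fun x => √2⁻¹ • Φ x, fun x y => ?_⟩
  have hs : √(2⁻¹ : ℝ) * √2⁻¹ = 2⁻¹ := Real.mul_self_sqrt (by norm_num)
  rw [← sq_eq_sq₀ (norm_nonneg _) (by positivity), norm_sub_sq_real]
  simp only [← real_inner_self_eq_norm_sq, real_inner_smul_left, real_inner_smul_right,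
    ← mul_assoc, hs, hΦ, Matrix.of_apply]
  have : (‖x - y‖ ^ p) ^ 2 = (‖x - y‖ ^ 2) ^ p := by
    rw [← Real.rpow_natCast, ← Real.rpow_natCast, ← Real.rpow_mul (norm_nonneg _),
      ← Real.rpow_mul (norm_nonneg _), mul_comm]
  rw [this]
  simp [Real.zero_rpow h0.ne']
  ring

/-- If `(X, d)` is a metric space and `0 < α ≤ 1`, then `d^α` is again a metric on `X`
(non-negative, vanishing exactly on the diagonal, symmetric, and satisfying the triangle
inequality); moreover, if `d` is Euclidean then so is `d^α`. -/
theorem metric_rpow_is_metric_and_preserves_euclidean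
    {X : Type*} [MetricSpace X] (α : ℝ) (h0 : 0 < α) (h1 : α ≤ 1) :
    (∀ x y : X, 0 ≤ dist x y ^ α) ∧
    (∀ x y : X, dist x y ^ α = 0 ↔ x = y) ∧
    (∀ x y : X, dist x y ^ α = dist y x ^ α) ∧
    (∀ x y z : X, dist x z ^ α ≤ dist x y ^ α + dist y z ^ α) ∧
    (IsEuclidean (fun x y : X => dist x y) →
      IsEuclidean (fun x y : X => dist x y ^ α)) := by
  refine ⟨fun x y => by positivity, fun x y => ?_, fun x y => by rw [dist_comm],
    fun x y z => ?_, ?_⟩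
  · rw [Real.rpow_eq_zero dist_nonneg h0.ne', dist_eq_zero]
  · exact (Real.rpow_le_rpow dist_nonneg (dist_triangle x y z) h0.le).trans
      (Real.rpow_add_le_add_rpow dist_nonneg dist_nonneg h0.le h1)
  · rintro ⟨H, _, _, Φ, hΦ⟩
    obtain ⟨E, i1, i2, Ψ, hΨ⟩ := exists_embedding_norm_rpow (H := H) h0 h1
    exact ⟨E, i1, i2, Ψ ∘ Φ, fun x y => by simp only [Function.comp, hΨ, hΦ]⟩
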